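/- Let dμ_α(θ) = k(θ)·w_α(θ) dθ, where k : (α, 2π − α) → ℝ satisfies k(θ) ≥ k₀ for some constant k₀ > 0 and the Lipschitz condition |k(θ₁) − k(θ₂)| ≤ λ·|θ₁ − θ₂| for all θ₁, θ₂ ∈ (α, 2π − α) and some constant λ > 0. Let (φ_n)_{n≥0} be the orthonormal polynomials with respect to μ_α. Then there exists a constant C such that |φ_n(e^{iθ})| ≤ C for all θ ∈ (α, 2π − α) and all n ∈ ℕ. -/

import Mathlib

/-!
The proof compares the orthonormal polynomials of `k · w_α` with those of `w_α` itself, which are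
explicit and uniformly bounded (the method of Korous).

*The unweighted polynomials.* Put `c = cos (α/2)`, `σ = sin (α/2)` and parametrize the arc by
`θ = 2u`, `u = arccos (c cos t)`, `t ∈ (0, π)`. Then `w_α dθ = σ dt / sin² u`. The Szegő recursion
with the constant reflection coefficient `σ` (`psiPair`) produces polynomials `ψ_n` of degree
`n + 1` and their reversals `ψ_n^*`, and on the arc
`ψ_n(e^{iθ}) = e^{i(n+1)u} (P_{n+1}(t) + iβ sin u cos (nt))`, where
`P_n(t) = (1 + σ) cos (nt) - (1 - σ) cos ((n-2)t)` and `β = 2(1 - σ)/c` (`psiPair_eval`). Hence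
`|ψ_n| ≤ 2 + β` on the arc. Orthogonality of `ψ_n` to `1, …, z^n` (`psi_orth_t`) reduces to the
moments `∫ cos (mu) P_n / sin² u dt` and `∫ sin (mu) cos (nt) / sin u dt`, which obey three-term
recursions in `m` because `cos u = c cos t`. The recursion for `ψ_n` also gives a
Christoffel–Darboux formula (`psiPair_CD`).

*The comparison.* Let `D_n(x, y)` be the Christoffel–Darboux kernel of the `ψ_j`, so that
`(1 - x ȳ) D_n(x, y) = ψ_n^*(x) conj ψ_n^*(y) - ψ_n(x) conj ψ_n(y)`. Integrating `φ_{n+1}` against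
`D_n(x, ·)` for the measure `w_α dθ` reproduces `φ_{n+1}(x)` up to a multiple of
`ψ_n(x) ∫ φ_{n+1} conj ψ_n`. Since `φ_{n+1}` is orthogonal to `D_n(x, ·)` for `k w_α`, the integral
`k(x) ∫ φ_{n+1} D_n(x, ·)` equals `∫ φ_{n+1} D_n(x, ·) (k(x) - k)`, and the Lipschitz condition
cancels the singularity of `D_n` on the diagonal. All that remains is the `L¹` norm of `φ_{n+1}`,
which is bounded by orthonormality and `k ≥ k₀`. This argument is `korous_bound`.
-/

open MeasureTheory Filter Set

/-- The Akhiezer-Chebyshev weight on the arc `(α, 2π - α)`. -/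
noncomputable def wAC (α θ : ℝ) : ℝ :=
  Real.sin (α / 2) /
    (2 * Real.sin (θ / 2) * Real.sqrt (Real.cos (α / 2) ^ 2 - Real.cos (θ / 2) ^ 2))

set_option linter.unusedSectionVars false

/-! ### The parametrization of the arc -/

/-- Half of the angle `θ` on the arc as a function of the uniformizing parameter `t ∈ [0, π]`:
`cos u = c cos t`. -/
noncomputable def arcU (c t : ℝ) : ℝ := Real.arccos (c * Real.cos t)

/-- The pair `c = cos (α/2)`, `σ = sin (α/2)` attached to an arc with `0 < α < π`. -/
structure ArcParam (c σ : ℝ) : Prop where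
  c_pos : 0 < c
  σ_pos : 0 < σ
  sq : c ^ 2 + σ ^ 2 = 1

namespace ArcParam
variable {c σ : ℝ} (h : ArcParam c σ)
include h

theorem σ_lt : σ < 1 := by nlinarith [h.c_pos, h.σ_pos, h.sq]
theorem c_lt : c < 1 := by nlinarith [h.c_pos, h.σ_pos, h.sq]

theorem sq_mul_cos_sq_lt (t : ℝ) : c ^ 2 * Real.cos t ^ 2 < 1 := by
  nlinarith [h.σ_pos, h.sq, Real.cos_sq_le_one t, sq_nonneg c, h.c_lt, h.c_pos, pow_pos h.σ_pos 2]

theorem abs_lt (t : ℝ) : |c * Real.cos t| < 1 := by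
  rw [← sq_lt_one_iff_abs_lt_one, mul_pow]; exact h.sq_mul_cos_sq_lt t

theorem cos_arcU (t : ℝ) : Real.cos (arcU c t) = c * Real.cos t :=
  Real.cos_arccos (_root_.abs_lt.1 (h.abs_lt t)).1.le (_root_.abs_lt.1 (h.abs_lt t)).2.le

theorem sin_arcU (t : ℝ) : Real.sin (arcU c t) = Real.sqrt (1 - c ^ 2 * Real.cos t ^ 2) := by
  rw [arcU, Real.sin_arccos, mul_pow]

theorem sin_arcU_pos (t : ℝ) : 0 < Real.sin (arcU c t) := by
  rw [h.sin_arcU]; exact Real.sqrt_pos.2 (by linarith [h.sq_mul_cos_sq_lt t])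

theorem sin_arcU_sq (t : ℝ) : Real.sin (arcU c t) ^ 2 = 1 - c ^ 2 * Real.cos t ^ 2 := by
  rw [Real.sin_sq, h.cos_arcU]; ring

end ArcParam

@[fun_prop]
theorem continuous_arcU (c : ℝ) : Continuous (arcU c) := by unfold arcU; fun_prop

theorem arcU_pi_sub (c t : ℝ) : arcU c (Real.pi - t) = Real.pi - arcU c t := by
  simp [arcU, Real.cos_pi_sub, Real.arccos_neg]

/-- `1 / sin u`; the square is the density of `w_α dθ` in the parameter `t`, up to `σ`. -/
noncomputable def invS (c t : ℝ) : ℝ := (Real.sin (arcU c t))⁻¹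

theorem invS_pi_sub (c t : ℝ) : invS c (Real.pi - t) = invS c t := by
  rw [invS, arcU_pi_sub, Real.sin_pi_sub, invS]

theorem ArcParam.continuous_invS {c σ : ℝ} (h : ArcParam c σ) : Continuous (invS c) := by
  unfold invS
  exact (by fun_prop : Continuous fun t => Real.sin (arcU c t)).inv₀ fun t => (h.sin_arcU_pos t).ne'

theorem ArcParam.invS_mul {c σ : ℝ} (h : ArcParam c σ) (t : ℝ) :
    invS c t * Real.sin (arcU c t) = 1 := inv_mul_cancel₀ (h.sin_arcU_pos t).ne'

/-! ### Trigonometric moments -/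

/-- The cosine moments of `dt / sin² u`. -/
noncomputable def momE (c : ℝ) (n : ℤ) : ℝ := ∫ t in (0)..Real.pi, Real.cos (n * t) * invS c t ^ 2

/-- The trigonometric polynomial `P_n` that is the real part of the unweighted orthogonal
polynomial after removal of a unimodular factor. -/
noncomputable def trigP (σ : ℝ) (n : ℤ) (t : ℝ) : ℝ :=
  (1 + σ) * Real.cos (n * t) - (1 - σ) * Real.cos (((n - 2 : ℤ) : ℝ) * t)

@[fun_prop]
theorem continuous_trigP (σ : ℝ) (n : ℤ) : Continuous (trigP σ n) := by unfold trigP; fun_prop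

/-- The moment of `cos (mu)` against `P_n`; it gives the real part of the inner products of the
unweighted polynomials with powers of `z`. -/
noncomputable def momA (c σ : ℝ) (m : ℕ) (n : ℤ) : ℝ :=
  ∫ t in (0)..Real.pi, Real.cos (m * arcU c t) * trigP σ n t * invS c t ^ 2

/-- The moment of `sin (mu)` against the imaginary part `sin u cos (nt)`. -/
noncomputable def momB (c : ℝ) (m : ℕ) (n : ℤ) : ℝ :=
  ∫ t in (0)..Real.pi, Real.sin (m * arcU c t) * Real.cos (n * t) * invS c t

theorem two_cos_mul_cos_int (n : ℤ) (t : ℝ) : 2 * Real.cos t * Real.cos (n * t) =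
    Real.cos (((n + 1 : ℤ) : ℝ) * t) + Real.cos (((n - 1 : ℤ) : ℝ) * t) := by
  push_cast
  rw [add_mul, sub_mul, one_mul, Real.cos_add, Real.cos_sub]; ring

theorem two_cos_mul_trigP (σ : ℝ) (n : ℤ) (t : ℝ) : 2 * Real.cos t * trigP σ n t =
    trigP σ (n + 1) t + trigP σ (n - 1) t := by
  have h1 := two_cos_mul_cos_int n t
  have h2 := two_cos_mul_cos_int (n - 2) t
  rw [show n - 2 + 1 = n + 1 - 2 by ring, show n - 2 - 1 = n - 1 - 2 by ring] at h2
  unfold trigP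
  linear_combination (1 + σ) * h1 - (1 - σ) * h2

theorem cos_nat_add_two (m : ℕ) (u : ℝ) : Real.cos (((m + 2 : ℕ) : ℝ) * u) =
    2 * Real.cos u * Real.cos (((m + 1 : ℕ) : ℝ) * u) - Real.cos (m * u) := by
  have := two_cos_mul_cos_int (m + 1) u
  push_cast at this ⊢
  ring_nf at this ⊢
  linarith

theorem sin_nat_add_two (m : ℕ) (u : ℝ) : Real.sin (((m + 2 : ℕ) : ℝ) * u) =
    2 * Real.cos u * Real.sin (((m + 1 : ℕ) : ℝ) * u) - Real.sin (m * u) := by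
  have h1 := Real.sin_add (((m + 1 : ℕ) : ℝ) * u) u
  have h2 := Real.sin_sub (((m + 1 : ℕ) : ℝ) * u) u
  have e1 : ((m + 1 : ℕ) : ℝ) * u + u = ((m + 2 : ℕ) : ℝ) * u := by push_cast; ring
  have e2 : ((m + 1 : ℕ) : ℝ) * u - u = m * u := by push_cast; ring
  rw [e1] at h1; rw [e2] at h2
  linear_combination h1 + h2

theorem integral_cos_int (n : ℤ) (hn : n ≠ 0) : ∫ t in (0)..Real.pi, Real.cos (n * t) = 0 := by
  have : (n : ℝ) ≠ 0 := by exact_mod_cast hn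
  rw [intervalIntegral.integral_comp_mul_left (fun x => Real.cos x) this]
  simp [Real.sin_int_mul_pi]

namespace ArcParam
variable {c σ : ℝ} (h : ArcParam c σ)
include h

theorem ii {f : ℝ → ℝ} (hf : Continuous f) (k : ℕ) :
    IntervalIntegrable (fun t => f t * invS c t ^ k) volume 0 Real.pi :=
  (hf.mul (h.continuous_invS.pow k)).intervalIntegrable _ _

theorem momE_one : momE c 1 = 0 := by
  have h1 := intervalIntegral.integral_comp_sub_left
    (fun t => Real.cos ((1 : ℤ) * t) * invS c t ^ 2) (a := 0) (b := Real.pi) Real.pi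
  simp only [sub_self, sub_zero] at h1
  have h2 : momE c 1 = - momE c 1 := by
    conv_rhs => rw [momE, ← h1, ← intervalIntegral.integral_neg]
    refine intervalIntegral.integral_congr fun t _ => ?_
    simp [invS_pi_sub, Real.cos_pi_sub]
  linarith

/-- Obtained by integrating `4 cos (nt) = 4 cos (nt) sin² u / sin² u` and expanding `sin² u`, a
trigonometric polynomial in `t` of degree two. -/
theorem momE_rec (n : ℤ) : 2 * (1 + σ ^ 2) * momE c n - (1 - σ ^ 2) * (momE c (n + 2) + momE c (n - 2))
    = 4 * ∫ t in (0)..Real.pi, Real.cos (n * t) := by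
  have I : ∀ m : ℤ, IntervalIntegrable (fun t => Real.cos (m * t) * invS c t ^ 2) volume 0 Real.pi :=
    fun m => h.ii (by fun_prop) 2
  unfold momE
  rw [← intervalIntegral.integral_add (I _) (I _), ← intervalIntegral.integral_const_mul,
    ← intervalIntegral.integral_const_mul, ← intervalIntegral.integral_sub ((I _).const_mul _)
    (((I _).add (I _)).const_mul _), ← intervalIntegral.integral_const_mul]
  refine intervalIntegral.integral_congr fun t _ => ?_
  have h1 := two_cos_mul_cos_int n t
  have h2 := two_cos_mul_cos_int (n + 1) t
  have h3 := two_cos_mul_cos_int (n - 1) t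
  rw [show n + 1 + 1 = n + 2 by ring, show n + 1 - 1 = n by ring] at h2
  rw [show n - 1 + 1 = n by ring, show n - 1 - 1 = n - 2 by ring] at h3
  have h4 := h.invS_mul t
  have h5 := h.sin_arcU_sq t
  have h6 : invS c t ^ 2 * (1 - c ^ 2 * Real.cos t ^ 2) = 1 := by rw [← h5, ← mul_pow, h4, one_pow]
  have h7 : Real.cos (((n + 2 : ℤ) : ℝ) * t) + Real.cos (((n - 2 : ℤ) : ℝ) * t) =
      4 * Real.cos t ^ 2 * Real.cos (n * t) - 2 * Real.cos (n * t) := by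
    linear_combination - h2 - h3 - 2 * Real.cos t * h1
  have h8 := h.sq
  rw [← add_mul, h7]
  linear_combination 4 * Real.cos (n * t) * h6 + 4 * Real.cos (n * t) * invS c t ^ 2 * Real.cos t ^ 2 * h8

theorem momE_zero : σ * momE c 0 = Real.pi := by
  have hσ := h.σ_pos
  have hσ1 := h.σ_lt
  have hden : ∀ t : ℝ, 0 < (1 + σ) - (1 - σ) * Real.cos (2 * t) := by
    intro t; nlinarith [Real.cos_le_one (2 * t)]
  -- this primitive agrees with `arctan (tan t / σ)` but has no jump at `π / 2`
  have hd : ∀ t : ℝ, HasDerivAt (fun t => t + Real.arctan ((1 - σ) * Real.sin (2 * t) /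
      ((1 + σ) - (1 - σ) * Real.cos (2 * t)))) (σ * (Real.cos ((0 : ℤ) * t) * invS c t ^ 2)) t := by
    intro t
    have h2 : HasDerivAt (fun t : ℝ => 2 * t) 2 t := by simpa using (hasDerivAt_id t).const_mul 2
    have hs := (h2.sin.const_mul (1 - σ))
    have hc := (h2.cos.const_mul (1 - σ)).const_sub (1 + σ)
    have := (hasDerivAt_id t).add ((hs.div hc (hden t).ne').arctan)
    refine this.congr_deriv ?_
    have e1 : invS c t ^ 2 * (1 - c ^ 2 * Real.cos t ^ 2) = 1 := by
      rw [← h.sin_arcU_sq, ← mul_pow, h.invS_mul, one_pow]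
    have e2 : invS c t ^ 2 = 1 / (1 - c ^ 2 * Real.cos t ^ 2) := by
      rw [eq_div_iff]; · exact e1
      · linarith [h.sq_mul_cos_sq_lt t]
    have e3 : (1 - c ^ 2 * Real.cos t ^ 2) ≠ 0 := by linarith [h.sq_mul_cos_sq_lt t]
    have e4 := (hden t).ne'
    have e5 : ((1 + σ) - (1 - σ) * Real.cos (2 * t)) ^ 2 + ((1 - σ) * Real.sin (2 * t)) ^ 2 ≠ 0 := by
      have := hden t; positivity
    have e6 : ((1 + σ) - (1 - σ) * Real.cos (2 * t)) ^ 2 + ((1 - σ) * Real.sin (2 * t)) ^ 2 =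
      4 * (1 - c ^ 2 * Real.cos t ^ 2) := by
      rw [mul_pow, Real.sin_sq, Real.cos_two_mul]
      linear_combination 4 * Real.cos t ^ 2 * h.sq
    rw [e2]
    simp only [Pi.div_apply, Int.cast_zero, zero_mul, Real.cos_zero, one_mul]
    have e7 : 1 + ((1 - σ) * Real.sin (2 * t) / ((1 + σ) - (1 - σ) * Real.cos (2 * t))) ^ 2 =
       4 * (1 - c ^ 2 * Real.cos t ^ 2) / ((1 + σ) - (1 - σ) * Real.cos (2 * t)) ^ 2 := by
      rw [← e6]; field_simp
    rw [e7]
    field_simp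
    have e8 := Real.sin_sq_add_cos_sq (2 * t)
    have e9 := Real.cos_two_mul t
    have e10 := h.sq
    linear_combination -4 * Real.cos t ^ 2 * e10 - 2 * (1 - σ) ^ 2 * e8 + 2 * (1 - σ ^ 2) * e9
  have := intervalIntegral.integral_eq_sub_of_hasDerivAt (a := 0) (b := Real.pi) (fun t _ => hd t)
    ((h.ii (by fun_prop) 2).const_mul _)
  rw [intervalIntegral.integral_const_mul] at this
  rw [momE, this]
  simp [Real.sin_two_pi]

theorem momA_zero (n : ℤ) : momA c σ 0 n = (1 + σ) * momE c n - (1 - σ) * momE c (n - 2) := by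
  have I : ∀ m : ℤ, IntervalIntegrable (fun t => Real.cos (m * t) * invS c t ^ 2) volume 0 Real.pi :=
    fun m => h.ii (by fun_prop) 2
  unfold momA momE
  rw [← intervalIntegral.integral_const_mul, ← intervalIntegral.integral_const_mul,
    ← intervalIntegral.integral_sub ((I _).const_mul _) ((I _).const_mul _)]
  refine intervalIntegral.integral_congr fun t _ => ?_
  simp [trigP]; ring

theorem momE_neg (n : ℤ) : momE c (-n) = momE c n := by
  simp [momE]

/-- `P_{n+1}` is orthogonal to constants: `1 / sin² u` has geometrically decaying even cosine
moments with ratio `(1 - σ) / (1 + σ)`, and vanishing odd ones. -/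
theorem momA_zero_pos (n : ℕ) : momA c σ 0 (n + 1) = 0 := by
  have hσ := h.σ_pos
  have hσ1 := h.σ_lt
  induction n using Nat.twoStepInduction with
  | zero =>
    rw [h.momA_zero]
    have : momE c (((0 : ℕ) : ℤ) + 1 - 2) = momE c 1 := by rw [← h.momE_neg 1]; norm_num
    rw [this]; norm_num [h.momE_one]
  | one =>
    rw [h.momA_zero]
    have e := h.momE_rec 0
    rw [zero_add, zero_sub, h.momE_neg] at e
    have e0 := h.momE_zero
    simp only [Int.cast_zero, zero_mul, Real.cos_zero, intervalIntegral.integral_const, sub_zero,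
      smul_eq_mul, mul_one] at e
    norm_num
    have : (1 - σ) * ((1 + σ) * momE c 2 - (1 - σ) * momE c 0) = 0 := by
      linear_combination -(1/2) * e + 2 * e0
    exact (mul_eq_zero.1 this).resolve_left (by linarith)
  | more n ih _ =>
    rw [h.momA_zero] at ih ⊢
    have e := h.momE_rec (n + 1)
    rw [integral_cos_int _ (by omega)] at e
    push_cast at e ih ⊢
    rw [show (n : ℤ) + 2 + 1 = n + 1 + 2 by ring, show (n : ℤ) + 1 + 2 - 2 = n + 1 by ring]
    have : (1 - σ) * ((1 + σ) * momE c (n + 1 + 2) - (1 - σ) * momE c (n + 1)) = 0 := by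
      linear_combination -e + (1 + σ) * ih
    exact (mul_eq_zero.1 this).resolve_left (by linarith)

theorem momA_zero_zero : (1 + σ) * momA c σ 0 0 = 4 * Real.pi := by
  rw [h.momA_zero, zero_sub, h.momE_neg]
  have e := h.momE_rec 0
  rw [zero_add, zero_sub, h.momE_neg] at e
  have e0 := h.momE_zero
  simp only [Int.cast_zero, zero_mul, Real.cos_zero, intervalIntegral.integral_const, sub_zero,
      smul_eq_mul, mul_one] at e
  linear_combination (1/2) * e + 2 * e0

theorem ia (m : ℕ) (n : ℤ) : IntervalIntegrable
    (fun t => Real.cos (m * arcU c t) * trigP σ n t * invS c t ^ 2) volume 0 Real.pi :=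
  h.ii (by fun_prop) 2

theorem ib (m : ℕ) (n : ℤ) : IntervalIntegrable
    (fun t => Real.sin (m * arcU c t) * Real.cos (n * t) * invS c t) volume 0 Real.pi := by
  have := h.ii (f := fun t => Real.sin (m * arcU c t) * Real.cos (n * t)) (by fun_prop) 1
  simpa only [pow_one] using this

theorem momA_one (n : ℤ) : momA c σ 1 n = c / 2 * (momA c σ 0 (n + 1) + momA c σ 0 (n - 1)) := by
  unfold momA
  rw [← intervalIntegral.integral_add (h.ia _ _) (h.ia _ _), ← intervalIntegral.integral_const_mul]
  refine intervalIntegral.integral_congr fun t _ => ?_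
  have e := two_cos_mul_trigP σ n t
  have e2 := h.cos_arcU t
  simp
  rw [e2]
  linear_combination c / 2 * invS c t ^ 2 * e

theorem momA_rec (m : ℕ) (n : ℤ) : momA c σ (m + 2) n =
    c * (momA c σ (m + 1) (n + 1) + momA c σ (m + 1) (n - 1)) - momA c σ m n := by
  unfold momA
  rw [← intervalIntegral.integral_add (h.ia _ _) (h.ia _ _), ← intervalIntegral.integral_const_mul,
    ← intervalIntegral.integral_sub (((h.ia _ _).add (h.ia _ _)).const_mul _) (h.ia _ _)]
  refine intervalIntegral.integral_congr fun t _ => ?_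
  have e := two_cos_mul_trigP σ n t
  have e2 := h.cos_arcU t
  have e3 := cos_nat_add_two m (arcU c t)
  rw [e3, e2]
  linear_combination c * invS c t ^ 2 * Real.cos (((m + 1 : ℕ) : ℝ) * arcU c t) * e

theorem momB_rec (m : ℕ) (n : ℤ) : momB c (m + 2) n =
    c * (momB c (m + 1) (n + 1) + momB c (m + 1) (n - 1)) - momB c m n := by
  unfold momB
  rw [← intervalIntegral.integral_add (h.ib _ _) (h.ib _ _), ← intervalIntegral.integral_const_mul,
    ← intervalIntegral.integral_sub (((h.ib _ _).add (h.ib _ _)).const_mul _) (h.ib _ _)]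
  refine intervalIntegral.integral_congr fun t _ => ?_
  have e := two_cos_mul_cos_int n t
  have e2 := h.cos_arcU t
  have e3 := sin_nat_add_two m (arcU c t)
  rw [e3, e2]
  linear_combination c * invS c t * Real.sin (((m + 1 : ℕ) : ℝ) * arcU c t) * e

theorem momB_zero (n : ℤ) : momB c 0 n = 0 := by simp [momB]

theorem momB_one (n : ℤ) : momB c 1 n = ∫ t in (0)..Real.pi, Real.cos (n * t) := by
  unfold momB
  refine intervalIntegral.integral_congr fun t _ => ?_
  have := h.invS_mul t
  simp
  linear_combination Real.cos (n * t) * this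

theorem momA_lt (m : ℕ) : ∀ n : ℤ, (m : ℤ) < n → momA c σ m n = 0 := by
  have h0 : ∀ n : ℤ, 0 < n → momA c σ 0 n = 0 := by
    intro n hn
    have := h.momA_zero_pos (n - 1).toNat
    rwa [show (((n - 1).toNat : ℕ) : ℤ) + 1 = n by omega] at this
  induction m using Nat.twoStepInduction with
  | zero => intro n hn; exact h0 n (by simpa using hn)
  | one =>
    intro n hn
    rw [h.momA_one, h0 _ (by omega), h0 _ (by omega)]; ring
  | more m ih1 ih2 =>
    intro n hn
    rw [h.momA_rec, ih1 _ (by omega), ih2 _ (by omega), ih2 _ (by omega)]; ring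

theorem momB_le (m : ℕ) : ∀ n : ℤ, (m : ℤ) ≤ n → momB c m n = 0 := by
  induction m using Nat.twoStepInduction with
  | zero => intro n _; exact h.momB_zero n
  | one =>
    intro n hn
    rw [h.momB_one, integral_cos_int _ (by omega)]
  | more m ih1 ih2 =>
    intro n hn
    rw [h.momB_rec, ih1 _ (by omega), ih2 _ (by omega), ih2 _ (by omega)]; ring

theorem momA_diag (n : ℕ) : momA c σ (n + 1) (n + 1) = c ^ (n + 1) / 2 * momA c σ 0 0 := by
  induction n with
  | zero =>
    have := h.momA_lt 0 2 (by norm_num)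
    rw [zero_add, h.momA_one]
    norm_num [this]
  | succ n ih =>
    rw [h.momA_rec, h.momA_lt n _ (by push_cast; omega), h.momA_lt (n + 1) _ (by push_cast; omega)]
    push_cast
    rw [show (n : ℤ) + 1 + 1 - 1 = n + 1 by ring, ih]; ring

theorem momB_diag (n : ℕ) : momB c (n + 1) n = c ^ n * Real.pi := by
  induction n with
  | zero => rw [zero_add, h.momB_one]; simp
  | succ n ih =>
    rw [h.momB_rec, h.momB_le n _ (by push_cast; omega), h.momB_le (n + 1) _ (by push_cast; omega)]
    push_cast
    rw [show (n : ℤ) + 1 - 1 = n by ring, ih]; ring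

/-- The real and imaginary parts cancel in the inner product of the unweighted polynomial of
degree `n + 1` with the constant `1`; this pins down the coefficient `2(1 - σ)/c`. -/
theorem momA_eq_momB (n : ℕ) : momA c σ (n + 1) (n + 1) =
    2 * (1 - σ) / c * momB c (n + 1) n := by
  rw [h.momA_diag, h.momB_diag]
  have h1 := h.momA_zero_zero
  have h2 := h.sq
  have h3 := h.σ_pos
  have h4 := h.c_pos
  have h5 : momA c σ 0 0 = 4 * Real.pi / (1 + σ) := by rw [eq_div_iff (by positivity), ← h1]; ring
  rw [h5, pow_succ]
  field_simp
  linear_combination 4 * h2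
end ArcParam

section Comparison
open Polynomial ComplexConjugate

/-! ### The unweighted orthogonal polynomials -/

/-- The orthogonal polynomial of degree `n + 1` for `w_α` and its reversal, normalized by the
Szegő recursion with constant reflection coefficient `σ`. The index is shifted because the
coefficient in degree one is exceptional (`2σ - 1` instead of `σ`). -/
noncomputable def psiPair (c σ : ℝ) : ℕ → ℂ[X] × ℂ[X]
  | 0 => (C (c : ℂ)⁻¹ * (X + C (2 * σ - 1 : ℂ)), C (c : ℂ)⁻¹ * (1 + C (2 * σ - 1 : ℂ) * X))
  | n + 1 => (C (c : ℂ)⁻¹ * (X * (psiPair c σ n).1 + C (σ : ℂ) * (psiPair c σ n).2),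
      C (c : ℂ)⁻¹ * ((psiPair c σ n).2 + C (σ : ℂ) * (X * (psiPair c σ n).1)))

theorem psiPair_natDegree (c σ : ℝ) (n : ℕ) :
    (psiPair c σ n).1.natDegree ≤ n + 1 ∧ (psiPair c σ n).2.natDegree ≤ n + 1 := by
  induction n with
  | zero =>
    constructor
    · simp only [psiPair]; compute_degree
    · simp only [psiPair]; compute_degree
  | succ n ih =>
    have hX : (X * (psiPair c σ n).1).natDegree ≤ n + 1 + 1 :=
      natDegree_mul_le.trans (by rw [natDegree_X]; omega)
    constructor
    · exact (natDegree_C_mul_le _ _).trans (natDegree_add_le_of_degree_le hX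
        ((natDegree_C_mul_le _ _).trans (by omega)))
    · exact (natDegree_C_mul_le _ _).trans (natDegree_add_le_of_degree_le (by omega)
        ((natDegree_C_mul_le _ _).trans hX))

theorem psiPair_conj (c σ : ℝ) (n : ℕ) (z : ℂ) :
    conj ((psiPair c σ n).1.eval z) = (psiPair c σ n).1.eval (conj z) ∧
    conj ((psiPair c σ n).2.eval z) = (psiPair c σ n).2.eval (conj z) := by
  induction n with
  | zero =>
    have h2 : conj (2 : ℂ) = 2 := map_ofNat _ 2
    simp [psiPair, h2]
  | succ n ih => simp [psiPair, ih]

/-- Christoffel–Darboux formula; `4σ(1 - σ)/c²` is the contribution of degree zero. It holds for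
the bilinear form since the coefficients of the polynomials are real. -/
theorem psiPair_CD {c σ : ℝ} (h : ArcParam c σ) (n : ℕ) (z w : ℂ) :
    (psiPair c σ n).2.eval z * (psiPair c σ n).2.eval w -
      (psiPair c σ n).1.eval z * (psiPair c σ n).1.eval w =
    (1 - z * w) * (4 * σ * (1 - σ) / c ^ 2 + ∑ j ∈ Finset.range n,
      (psiPair c σ j).1.eval z * (psiPair c σ j).1.eval w) := by
  have hc : (c : ℂ) ≠ 0 := by exact_mod_cast h.c_pos.ne'
  have hsq : (c : ℂ) ^ 2 + (σ : ℂ) ^ 2 = 1 := by exact_mod_cast h.sq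
  induction n with
  | zero =>
    simp [psiPair]
    field_simp
    ring
  | succ n ih =>
    rw [Finset.sum_range_succ, ← add_assoc, mul_add, ← ih]
    simp only [psiPair, eval_mul, eval_add, eval_C, eval_X]
    field_simp
    linear_combination (-(psiPair c σ n).2.eval z * (psiPair c σ n).2.eval w + z * w *
      (psiPair c σ n).1.eval z * (psiPair c σ n).1.eval w) * hsq

/-- The square root `e^{iu}` of the point `e^{iθ}` of the arc. -/
noncomputable def arcW (c t : ℝ) : ℂ := Complex.exp ((arcU c t : ℝ) * Complex.I)

theorem arcW_eq (c t : ℝ) : arcW c t =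
    (Real.cos (arcU c t) : ℂ) + (Real.sin (arcU c t) : ℂ) * Complex.I := by
  rw [arcW, Complex.exp_mul_I, Complex.ofReal_cos, Complex.ofReal_sin]

theorem continuous_arcW (c : ℝ) : Continuous (arcW c) := by unfold arcW; fun_prop

theorem arcW_norm (c t : ℝ) : ‖arcW c t‖ = 1 := Complex.norm_exp_ofReal_mul_I _

theorem arcW_conj (c t : ℝ) : conj (arcW c t) =
    (Real.cos (arcU c t) : ℂ) - (Real.sin (arcU c t) : ℂ) * Complex.I := by
  rw [arcW_eq]
  simp only [map_add, map_mul, Complex.conj_ofReal, Complex.conj_I]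
  ring

theorem arcW_pi_sub (c t : ℝ) : arcW c (Real.pi - t) = - conj (arcW c t) := by
  rw [arcW_conj, arcW_eq, arcU_pi_sub, Real.cos_pi_sub, Real.sin_pi_sub]; push_cast; ring

/-- Closed form on the arc: the recursion for `psiPair` turns into the three-term recursion of
`cos (nt)`, because `e^{±iu} = c cos t ± i sin u`. -/
theorem psiPair_eval {c σ : ℝ} (h : ArcParam c σ) (n : ℕ) (t : ℝ) :
    (psiPair c σ n).1.eval (arcW c t ^ 2) = arcW c t ^ (n + 1) * ((trigP σ (n + 1) t : ℂ) +
      (2 * (1 - σ) / c * (Real.sin (arcU c t) * Real.cos (n * t)) : ℝ) * Complex.I) ∧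
    (psiPair c σ n).2.eval (arcW c t ^ 2) = arcW c t ^ (n + 1) * ((trigP σ (n + 1) t : ℂ) -
      (2 * (1 - σ) / c * (Real.sin (arcU c t) * Real.cos (n * t)) : ℝ) * Complex.I) := by
  have hc : (c : ℂ) ≠ 0 := by exact_mod_cast h.c_pos.ne'
  have hsq : (c : ℂ) ^ 2 + (σ : ℂ) ^ 2 = 1 := by exact_mod_cast h.sq
  have hI := Complex.I_sq
  set S : ℂ := (Real.sin (arcU c t) : ℂ) with hS
  set x : ℂ := (Real.cos t : ℂ) with hx
  have hC : (Real.cos (arcU c t) : ℂ) = c * x := by rw [h.cos_arcU, Complex.ofReal_mul]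
  have hS2 : S ^ 2 = 1 - c ^ 2 * x ^ 2 := by
    have := h.sin_arcU_sq t
    rw [hS, hx]; exact_mod_cast this
  have hw := arcW_eq c t
  rw [hC, ← hS] at hw
  have hw2 : arcW c t * (c * x - S * Complex.I) = 1 := by
    rw [hw]; linear_combination hS2 - S ^ 2 * hI
  generalize arcW c t = w at *
  induction n with
  | zero =>
    have hP : (trigP σ ((0 : ℕ) + 1) t : ℂ) = 2 * σ * x := by
      have : trigP σ ((0 : ℕ) + 1) t = 2 * σ * Real.cos t := by
        unfold trigP; norm_num; ring
      rw [this]; simp only [Complex.ofReal_mul, Complex.ofReal_ofNat]; rfl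
    rw [hP]
    simp only [psiPair, eval_mul, eval_add, eval_C, eval_X, eval_one]
    simp only [Complex.ofReal_mul, Complex.ofReal_div, Complex.ofReal_sub, Complex.ofReal_one,
      Complex.ofReal_ofNat, CharP.cast_eq_zero, zero_mul, Real.cos_zero, mul_one, zero_add, pow_one]
    rw [← hS]
    constructor
    · field_simp
      linear_combination w * hw - (2 * σ - 1) * hw2
    · field_simp
      linear_combination (2 * σ - 1) * w * hw - hw2
  | succ n ih =>
    obtain ⟨ih1, ih2⟩ := ih
    set y : ℂ := (Real.cos (n * t) : ℂ) with hy
    set y1 : ℂ := (Real.cos (((n + 1 : ℕ) : ℝ) * t) : ℂ) with hy1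
    have hP : (trigP σ ((n : ℤ) + 1) t : ℂ) = (1 + σ) * y1 - (1 - σ) * (2 * x * y - y1) := by
      have h1 := two_cos_mul_cos_int n t
      rw [hy, hy1, hx]
      have : trigP σ ((n : ℤ) + 1) t = (1 + σ) * Real.cos (((n + 1 : ℕ) : ℝ) * t) -
          (1 - σ) * (2 * Real.cos t * Real.cos (n * t) - Real.cos (((n + 1 : ℕ) : ℝ) * t)) := by
        unfold trigP
        rw [show (n : ℤ) + 1 - 2 = n - 1 by ring]
        push_cast at h1 ⊢
        linear_combination (1 - σ) * h1
      exact_mod_cast this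
    have hP2 : (trigP σ (((n + 1 : ℕ) : ℤ) + 1) t : ℂ) =
        (1 + σ) * (2 * x * y1 - y) - (1 - σ) * y := by
      have h1 := two_cos_mul_cos_int (n + 1) t
      rw [hy, hy1, hx]
      have : trigP σ (((n + 1 : ℕ) : ℤ) + 1) t = (1 + σ) * (2 * Real.cos t *
          Real.cos (((n + 1 : ℕ) : ℝ) * t) - Real.cos (n * t)) - (1 - σ) * Real.cos (n * t) := by
        unfold trigP
        rw [show ((n + 1 : ℕ) : ℤ) + 1 - 2 = n by push_cast; ring]
        rw [show (n : ℤ) + 1 - 1 = n by ring] at h1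
        push_cast at h1 ⊢
        linear_combination -(1 + σ) * h1
      exact_mod_cast this
    rw [hP2]
    simp only [psiPair, eval_mul, eval_add, eval_C, eval_X]
    rw [ih1, ih2, hP]
    simp only [Complex.ofReal_mul, Complex.ofReal_div, Complex.ofReal_sub, Complex.ofReal_one,
      Complex.ofReal_ofNat]
    rw [← hS, ← hy, ← hy1]
    have hwpow : w ^ (n + 1) = w ^ (n + 2) * (c * x - S * Complex.I) := by
      rw [pow_succ w (n + 1)]; linear_combination - w ^ (n + 1) * hw2
    have e1 : w ^ 2 * w ^ (n + 1) = w ^ (n + 2) * (c * x + S * Complex.I) := by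
      rw [← hw]; ring
    obtain ⟨b, hb⟩ : ∃ b : ℂ, b = 2 * (1 - σ) / c := ⟨_, rfl⟩
    have hcb : c * b = 2 * (1 - σ) := by rw [hb]; field_simp
    have hb2 : (1 + σ) * b = 2 * c := by
      rw [hb]; field_simp; linear_combination -hsq
    rw [← hb]
    constructor
    · rw [inv_mul_eq_iff_eq_mul₀ hc]
      linear_combination (((1 + σ) * y1 - (1 - σ) * (2 * x * y - y1)) + b * (S * y) * Complex.I) *
        e1 + σ * (((1 + σ) * y1 - (1 - σ) * (2 * x * y - y1)) - b * (S * y) * Complex.I) * hwpow +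
        w ^ (n + 2) * ((1 + σ) * b * S ^ 2 * y * hI - (1 + σ) * b * y * hS2 +
          ((1 + σ) * c * x ^ 2 * y + (1 - σ) * x * y * S * Complex.I - S * y1 * Complex.I) * hcb -
          y * hb2)
    · rw [inv_mul_eq_iff_eq_mul₀ hc]
      linear_combination (((1 + σ) * y1 - (1 - σ) * (2 * x * y - y1)) - b * (S * y) * Complex.I) *
        hwpow + σ * (((1 + σ) * y1 - (1 - σ) * (2 * x * y - y1)) + b * (S * y) * Complex.I) * e1 +
        w ^ (n + 2) * ((1 + σ) * b * S ^ 2 * y * hI - (1 + σ) * b * y * hS2 +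
          ((1 + σ) * c * x ^ 2 * y - (1 - σ) * x * y * S * Complex.I + S * y1 * Complex.I) * hcb -
          y * hb2)

theorem psiPair_star {c σ : ℝ} (h : ArcParam c σ) (n : ℕ) (t : ℝ) :
    (psiPair c σ n).2.eval (arcW c t ^ 2) =
      (arcW c t ^ 2) ^ (n + 1) * conj ((psiPair c σ n).1.eval (arcW c t ^ 2)) := by
  rw [(psiPair_eval h n t).1, (psiPair_eval h n t).2]
  have h1 : arcW c t * conj (arcW c t) = 1 := by
    rw [Complex.mul_conj, Complex.normSq_eq_norm_sq, arcW_norm]; simp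
  have h2 : (arcW c t * conj (arcW c t)) ^ (n + 1) = 1 := by rw [h1, one_pow]
  rw [mul_pow] at h2
  simp only [map_mul, map_pow, map_add, Complex.conj_ofReal, Complex.conj_I]
  linear_combination -(arcW c t) ^ (n + 1) * ((trigP σ (n + 1) t : ℂ) -
      (2 * (1 - σ) / c * (Real.sin (arcU c t) * Real.cos (n * t)) : ℝ) * Complex.I) * h2

theorem psiPair_norm_le {c σ : ℝ} (h : ArcParam c σ) (n : ℕ) (t : ℝ) :
    ‖(psiPair c σ n).1.eval (arcW c t ^ 2)‖ ≤ 2 + 2 * (1 - σ) / c := by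
  have hσ := h.σ_pos
  have hσ1 : 0 < 1 - σ := by linarith [h.σ_lt]
  have hc := h.c_pos
  rw [(psiPair_eval h n t).1, norm_mul, norm_pow, arcW_norm, one_pow, one_mul]
  refine (norm_add_le _ _).trans (add_le_add ?_ ?_)
  · rw [Complex.norm_real, Real.norm_eq_abs, trigP]
    have h1 := Real.abs_cos_le_one ((((n : ℤ) + 1 : ℤ) : ℝ) * t)
    have h2 := Real.abs_cos_le_one ((((n : ℤ) + 1 - 2 : ℤ) : ℝ) * t)
    rw [abs_le] at h1 h2 ⊢
    constructor <;> nlinarith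
  · rw [norm_mul, Complex.norm_I, mul_one, Complex.norm_real, Real.norm_eq_abs, abs_mul,
      abs_of_nonneg (by positivity), abs_mul]
    refine mul_le_of_le_one_right (by positivity) ?_
    exact mul_le_one₀ (Real.abs_sin_le_one _) (abs_nonneg _) (Real.abs_cos_le_one _)

theorem psi_re {c σ : ℝ} (h : ArcParam c σ) (n j : ℕ) (t : ℝ) :
    ((arcW c t ^ 2) ^ j * conj ((psiPair c σ n).1.eval (arcW c t ^ 2))).re =
      Real.cos (((2 * j - (n + 1) : ℤ) : ℝ) * arcU c t) * trigP σ (n + 1) t +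
      2 * (1 - σ) / c * (Real.sin (((2 * j - (n + 1) : ℤ) : ℝ) * arcU c t) *
        (Real.sin (arcU c t) * Real.cos (n * t))) := by
  have : (arcW c t ^ 2) ^ j * conj ((psiPair c σ n).1.eval (arcW c t ^ 2)) =
    Complex.exp (((((2 * j - (n + 1) : ℤ) : ℝ) * arcU c t : ℝ) : ℂ) * Complex.I) *
      ((trigP σ (n + 1) t : ℂ) -
      (2 * (1 - σ) / c * (Real.sin (arcU c t) * Real.cos (n * t)) : ℝ) * Complex.I) := by
    rw [(psiPair_eval h n t).1]
    have e1 : Complex.exp (((((2 * j - (n + 1) : ℤ) : ℝ) * arcU c t : ℝ) : ℂ) * Complex.I) =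
        (arcW c t ^ 2) ^ j * conj (arcW c t) ^ (n + 1) := by
      rw [arcW, ← Complex.exp_conj, ← pow_mul, ← Complex.exp_nat_mul, ← Complex.exp_nat_mul,
        ← Complex.exp_add]
      congr 1
      simp only [map_mul, Complex.conj_ofReal, Complex.conj_I]
      push_cast; ring
    rw [e1]
    simp only [map_mul, map_pow, map_add, Complex.conj_ofReal, Complex.conj_I]
    ring
  rw [this, Complex.mul_re, Complex.exp_ofReal_mul_I_re, Complex.exp_ofReal_mul_I_im]
  simp only [Complex.sub_re, Complex.sub_im, Complex.ofReal_re, Complex.ofReal_im,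
    Complex.mul_I_re, Complex.mul_I_im]
  ring

/-- Orthogonality to `1, …, z^n`. The reflection `t ↦ π - t` conjugates the integrand, so only the
real part matters; the moments `momA`, `momB` vanish separately, except for `j = 0`, where they
cancel each other. -/
theorem psi_orth_t {c σ : ℝ} (h : ArcParam c σ) (n j : ℕ) (hj : j < n + 1) :
    ∫ t in (0)..Real.pi, (arcW c t ^ 2) ^ j * conj ((psiPair c σ n).1.eval (arcW c t ^ 2)) *
      ((invS c t ^ 2 : ℝ) : ℂ) = 0 := by
  set F : ℝ → ℂ := fun t => (arcW c t ^ 2) ^ j * conj ((psiPair c σ n).1.eval (arcW c t ^ 2)) *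
      ((invS c t ^ 2 : ℝ) : ℂ) with hF
  have hW := continuous_arcW c
  have hv := h.continuous_invS
  have hFc : Continuous F := by
    have : Continuous fun t => (psiPair c σ n).1.eval (arcW c t ^ 2) :=
      (psiPair c σ n).1.continuous.comp (hW.pow 2)
    have h2 := Complex.continuous_conj.comp this
    exact (((hW.pow 2).pow j).mul h2).mul (Complex.continuous_ofReal.comp (hv.pow 2))
  have hsym : ∀ t, F (Real.pi - t) = conj (F t) := by
    intro t
    simp only [hF, arcW_pi_sub, invS_pi_sub, map_mul, map_pow, map_neg, neg_sq,
      Complex.conj_conj, Complex.conj_ofReal, (psiPair_conj c σ n _).1]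
  have hFc2 : Continuous fun t => F (Real.pi - t) := hFc.comp (by fun_prop)
  have hflip := intervalIntegral.integral_comp_sub_left F (a := 0) (b := Real.pi) Real.pi
  simp only [sub_self, sub_zero] at hflip
  have h2 : 2 * ∫ t in (0)..Real.pi, F t = ((2 * ∫ t in (0)..Real.pi, (F t).re : ℝ) : ℂ) := by
    rw [two_mul]
    nth_rw 2 [← hflip]
    rw [← intervalIntegral.integral_add (hFc.intervalIntegrable _ _)
      (hFc2.intervalIntegrable _ _)]
    rw [← intervalIntegral.integral_const_mul, ← intervalIntegral.integral_ofReal]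
    refine intervalIntegral.integral_congr fun t _ => ?_
    rw [hsym, Complex.add_conj]
  have h3 : ∫ t in (0)..Real.pi, (F t).re = 0 := by
    have hre : ∀ t, (F t).re =
        Real.cos (((2 * j - (n + 1) : ℤ) : ℝ) * arcU c t) * trigP σ (n + 1) t * invS c t ^ 2 +
        2 * (1 - σ) / c * (Real.sin (((2 * j - (n + 1) : ℤ) : ℝ) * arcU c t) *
          Real.cos (((n : ℤ) : ℝ) * t) * invS c t) := by
      intro t
      simp only [hF]
      rw [Complex.re_mul_ofReal, psi_re h]
      have := h.invS_mul t
      push_cast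
      linear_combination 2 * (1 - σ) / c * Real.sin ((2 * j - (n + 1)) * arcU c t) *
        Real.cos (n * t) * invS c t * this
    simp_rw [hre]
    obtain ⟨k, hk⟩ : ∃ k : ℕ, (2 * j - (n + 1) : ℤ).natAbs = k := ⟨_, rfl⟩
    rcases j.eq_zero_or_pos with rfl | hj0
    · have e : (2 * (0 : ℕ) - (n + 1) : ℤ) = -((n + 1 : ℕ) : ℤ) := by push_cast; ring
      have e2 : ∀ t : ℝ, (((2 * (0 : ℕ) - (n + 1) : ℤ)) : ℝ) * t = -(((n + 1 : ℕ) : ℝ) * t) := by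
        intro t; rw [e]; push_cast; ring
      simp_rw [e2, Real.cos_neg, Real.sin_neg, neg_mul, mul_neg, ← sub_eq_add_neg]
      rw [intervalIntegral.integral_sub (h.ia _ _) ((h.ib _ _).const_mul _),
        intervalIntegral.integral_const_mul]
      have := h.momA_eq_momB n
      unfold momA momB at this
      linarith
    · have hA := h.momA_lt k (n + 1) (by omega)
      have hB := h.momB_le k n (by omega)
      unfold momA at hA
      unfold momB at hB
      rcases Int.natAbs_eq (2 * j - (n + 1) : ℤ) with e | e
      · rw [hk] at e
        have e2 : ∀ t : ℝ, (((2 * j - (n + 1) : ℤ)) : ℝ) * t = (k : ℝ) * t := by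
          intro t; rw [e]; push_cast; ring
        simp_rw [e2]
        rw [intervalIntegral.integral_add (h.ia _ _) ((h.ib k n).const_mul _),
          intervalIntegral.integral_const_mul, hA, hB]
        simp
      · rw [hk] at e
        have e2 : ∀ t : ℝ, (((2 * j - (n + 1) : ℤ)) : ℝ) * t = -((k : ℝ) * t) := by
          intro t; rw [e]; push_cast; ring
        simp_rw [e2, Real.cos_neg, Real.sin_neg, neg_mul, mul_neg, ← sub_eq_add_neg]
        rw [intervalIntegral.integral_sub (h.ia _ _) ((h.ib k n).const_mul _),
          intervalIntegral.integral_const_mul, hA, hB]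
        simp
  rw [h3] at h2
  simpa using h2

/-! ### The comparison theorem -/

theorem korous_poly_bound (p : ℂ[X]) : ∃ C : ℝ, ∀ z : ℂ, ‖z‖ = 1 → ‖p.eval z‖ ≤ C := by
  obtain ⟨C, hC⟩ := (isCompact_sphere (0 : ℂ) 1).exists_bound_of_continuousOn
    (f := fun z => p.eval z) p.continuous.continuousOn
  exact ⟨C, fun z hz => hC z (by simpa using hz)⟩

/-- Essentially bounded, almost everywhere strongly measurable functions; a class closed under
products and conjugation on which integrability for finite measures is automatic. -/
def BddMeas (μ : Measure ℝ) (f : ℝ → ℂ) : Prop :=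
  AEStronglyMeasurable f μ ∧ ∃ C : ℝ, ∀ᵐ x ∂μ, ‖f x‖ ≤ C

namespace BddMeas
variable {μ : Measure ℝ} {f g : ℝ → ℂ}

theorem mul (hf : BddMeas μ f) (hg : BddMeas μ g) : BddMeas μ (fun x => f x * g x) := by
  obtain ⟨hf, C, hC⟩ := hf
  obtain ⟨hg, D, hD⟩ := hg
  refine ⟨hf.mul hg, C * D, ?_⟩
  filter_upwards [hC, hD] with x h1 h2
  rw [norm_mul]
  exact mul_le_mul h1 h2 (norm_nonneg _) ((norm_nonneg _).trans h1)

theorem star (hf : BddMeas μ f) : BddMeas μ (fun x => (starRingEnd ℂ) (f x)) := by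
  obtain ⟨hf, C, hC⟩ := hf
  refine ⟨Complex.continuous_conj.comp_aestronglyMeasurable hf, C, ?_⟩
  filter_upwards [hC] with x h1
  simpa using h1

theorem integrable [IsFiniteMeasure μ] (hf : BddMeas μ f) : Integrable f μ :=
  Integrable.of_bound hf.1 _ hf.2.choose_spec

theorem const (a : ℂ) : BddMeas μ (fun _ => a) :=
  ⟨aestronglyMeasurable_const, ‖a‖, by simp⟩

theorem poly {e : ℝ → ℂ} (he : Continuous e) (he1 : ∀ x, ‖e x‖ = 1) (p : Polynomial ℂ) :
    BddMeas μ (fun x => p.eval (e x)) := by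
  obtain ⟨C, hC⟩ := korous_poly_bound p
  exact ⟨(p.continuous.comp he).aestronglyMeasurable, C, .of_forall fun x => hC _ (he1 x)⟩

end BddMeas

/-- `φ n` is orthogonal to every polynomial of smaller degree, by elimination of leading terms. -/
theorem orth_of_degree_lt (μ : Measure ℝ) [IsFiniteMeasure μ] (e : ℝ → ℂ) (he : Continuous e)
    (he1 : ∀ x, ‖e x‖ = 1) (k : ℝ → ℂ) (hk : BddMeas μ k) (φ : ℕ → ℂ[X])
    (hdeg : ∀ n : ℕ, (φ n).degree = n)
    (horth : ∀ n m : ℕ, n ≠ m → ∫ x, (φ n).eval (e x) * conj ((φ m).eval (e x)) * k x ∂μ = 0)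
    (n : ℕ) (p : ℂ[X]) (hp : p.degree < n) :
    ∫ x, (φ n).eval (e x) * conj (p.eval (e x)) * k x ∂μ = 0 := by
  have key : ∀ m : ℕ, m ≤ n → ∀ p : ℂ[X], p.degree < m →
      ∫ x, (φ n).eval (e x) * conj (p.eval (e x)) * k x ∂μ = 0 := by
    intro m
    induction m with
    | zero =>
      intro _ p hp
      have : p = 0 := by
        rw [← degree_eq_bot]; simpa using hp
      simp [this]
    | succ m ih =>
      intro hm p hp
      have hc : (φ m).coeff m ≠ 0 := by
        have := hdeg m
        have hne : φ m ≠ 0 := by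
          rintro h; rw [h] at this; simp at this
        have hnd := natDegree_eq_of_degree_eq_some this
        have := leadingCoeff_ne_zero.2 hne
        rwa [leadingCoeff, hnd] at this
      set a : ℂ := p.coeff m / (φ m).coeff m with ha
      have hq : (p - C a * φ m).degree < m := by
        rw [degree_lt_iff_coeff_zero]
        intro j hj
        rcases hj.eq_or_lt with rfl | hj
        · simp [ha, hc]
        · have h1 : p.coeff j = 0 := (degree_lt_iff_coeff_zero _ _).1 hp j hj
          have h2 : (φ m).coeff j = 0 := coeff_eq_zero_of_degree_lt (by rw [hdeg]; exact_mod_cast hj)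
          simp [h1, h2]
      have e1 : ∀ x, (φ n).eval (e x) * conj (p.eval (e x)) * k x =
          (φ n).eval (e x) * conj ((p - C a * φ m).eval (e x)) * k x +
            conj a * ((φ n).eval (e x) * conj ((φ m).eval (e x)) * k x) := by
        intro x
        simp only [eval_sub, eval_mul, eval_C, map_sub, map_mul]
        ring
      have I : ∀ q : ℂ[X], BddMeas μ fun x => (φ n).eval (e x) * conj (q.eval (e x)) * k x :=
        fun q => ((BddMeas.poly he he1 _).mul (BddMeas.poly he he1 q).star).mul hk
      simp_rw [e1]
      rw [integral_add (I _).integrable ((BddMeas.const _).mul (I _)).integrable,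
        ih (by omega) _ hq, integral_const_mul, horth n m (by omega)]
      simp
  exact key n le_rfl p hp

/-- Comparison theorem of Korous, for a measure transported to the unit circle by `e`: if the
`ψ n` (of degree at most `n + 1`) are bounded by `M`, orthogonal to lower powers and satisfy a
Christoffel–Darboux formula, then the polynomials orthogonal for the density `k` are bounded,
provided that `k` is bounded, bounded below and Lipschitz for the chordal distance. -/
theorem korous_bound (μ : Measure ℝ) [IsFiniteMeasure μ] (hμ : μ ≠ 0) (S : Set ℝ)
    (hS : ∀ᵐ x ∂μ, x ∈ S) (e : ℝ → ℂ) (he : Continuous e) (he1 : ∀ x, ‖e x‖ = 1)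
    (k : ℝ → ℝ) (hkm : AEStronglyMeasurable k μ) (k₀ k₁ lam M Nrm : ℝ) (hk₀ : 0 < k₀)
    (hk : ∀ x ∈ S, k₀ ≤ k x) (hk₁ : ∀ x ∈ S, k x ≤ k₁)
    (hlip : ∀ x ∈ S, ∀ y ∈ S, |k x - k y| ≤ lam * ‖1 - e x * conj (e y)‖)
    (ψ ψs : ℕ → ℂ[X]) (hψdeg : ∀ n, (ψ n).natDegree ≤ n + 1)
    (hψM : ∀ n, ∀ x ∈ S, ‖(ψ n).eval (e x)‖ ≤ M)
    (hψs : ∀ n, ∀ x ∈ S, (ψs n).eval (e x) = e x ^ (n + 1) * conj ((ψ n).eval (e x)))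
    (hψorth : ∀ n, ∀ j < n + 1, ∫ x, e x ^ j * conj ((ψ n).eval (e x)) ∂μ = 0)
    (d : ℂ) (hd : d ≠ 0)
    (hCD : ∀ n, ∀ x y, (ψs n).eval (e x) * conj ((ψs n).eval (e y)) -
      (ψ n).eval (e x) * conj ((ψ n).eval (e y)) = (1 - e x * conj (e y)) *
        (d + ∑ j ∈ Finset.range n, (ψ j).eval (e x) * conj ((ψ j).eval (e y))))
    (φ : ℕ → ℂ[X]) (hdeg : ∀ n : ℕ, (φ n).degree = n)
    (horth : ∀ n m : ℕ, ∫ x, (φ n).eval (e x) * conj ((φ m).eval (e x)) * (k x : ℂ) ∂μ =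
      if n = m then (Nrm : ℂ) else 0) :
    ∃ C : ℝ, ∀ x ∈ S, ∀ n : ℕ, ‖(φ (n + 1)).eval (e x)‖ ≤ C := by
  have hkB : BddMeas μ (fun x => (k x : ℂ)) := by
    refine ⟨Complex.continuous_ofReal.comp_aestronglyMeasurable hkm, k₁, ?_⟩
    filter_upwards [hS] with x hx
    rw [Complex.norm_real, Real.norm_of_nonneg (hk₀.le.trans (hk x hx))]
    exact hk₁ x hx
  have P : ∀ p : ℂ[X], BddMeas μ (fun x => p.eval (e x)) := BddMeas.poly he he1
  have hE : BddMeas μ e := by simpa using P X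
  have hmu : 0 < μ.real univ := by
    rw [measureReal_def, ENNReal.toReal_pos_iff]
    exact ⟨by simpa [pos_iff_ne_zero] using hμ, measure_lt_top _ _⟩
  have hM0 : ∀ _ : ℕ, 0 ≤ M := by
    intro n
    obtain ⟨x, hx⟩ : ∃ x, x ∈ S := by
      have : NeZero μ := ⟨hμ⟩
      exact hS.exists
    exact (norm_nonneg _).trans (hψM n x hx)
  have hL1 : ∀ n, ∫ x, ‖(φ n).eval (e x)‖ ∂μ ≤ (μ.real univ + Nrm / k₀) / 2 := by
    intro n
    have hsq : ∫ x, ‖(φ n).eval (e x)‖ ^ 2 * k x ∂μ = Nrm := by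
      have h := horth n n
      rw [if_pos rfl] at h
      have h2 : ∀ x, (φ n).eval (e x) * conj ((φ n).eval (e x)) * (k x : ℂ) =
          ((‖(φ n).eval (e x)‖ ^ 2 * k x : ℝ) : ℂ) := by
        intro x; rw [Complex.mul_conj, Complex.normSq_eq_norm_sq]; push_cast; rfl
      simp_rw [h2] at h
      rw [integral_complex_ofReal] at h
      exact_mod_cast h
    have hi : Integrable (fun x => ‖(φ n).eval (e x)‖ ^ 2 * k x) μ := by
      have := (((P (φ n)).mul (P (φ n)).star).mul hkB).integrable.re
      refine this.congr (.of_forall fun x => ?_)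
      simp only [RCLike.re_to_complex]
      rw [Complex.mul_conj, Complex.normSq_eq_norm_sq, ← Complex.ofReal_mul, Complex.ofReal_re]
    have : ∫ x, ‖(φ n).eval (e x)‖ ∂μ ≤
        ∫ x, (1 + ‖(φ n).eval (e x)‖ ^ 2 * k x / k₀) / 2 ∂μ := by
      refine integral_mono_ae (P _).integrable.norm ?_ ?_
      · exact ((integrable_const 1).add (hi.div_const _)).div_const _
      · filter_upwards [hS] with x hx
        have h1 : 1 ≤ k x / k₀ := by rw [le_div_iff₀ hk₀]; linarith [hk x hx]
        have := mul_le_mul_of_nonneg_left h1 (sq_nonneg ‖(φ n).eval (e x)‖)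
        rw [mul_div_assoc]
        nlinarith [sq_nonneg (‖(φ n).eval (e x)‖ - 1)]
    refine this.trans (le_of_eq ?_)
    rw [integral_div, integral_add (integrable_const 1) (hi.div_const _), integral_div, hsq]
    simp
  set L := (μ.real univ + Nrm / k₀) / 2 with hL
  have hL0 : 0 ≤ L := (integral_nonneg fun _ => norm_nonneg _).trans (hL1 0)
  have hψp : ∀ n, ∀ p : ℂ[X], p.natDegree < n + 1 →
      ∫ x, p.eval (e x) * conj ((ψ n).eval (e x)) ∂μ = 0 := by
    intro n p hp
    have : ∀ x, p.eval (e x) * conj ((ψ n).eval (e x)) =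
        ∑ j ∈ Finset.range (n + 1), p.coeff j * (e x ^ j * conj ((ψ n).eval (e x))) := by
      intro x
      rw [eval_eq_sum_range' hp, Finset.sum_mul]
      simp_rw [mul_assoc]
    simp_rw [this]
    rw [integral_finsetSum]
    · refine Finset.sum_eq_zero fun j hj => ?_
      rw [integral_const_mul, hψorth n j (Finset.mem_range.1 hj), mul_zero]
    · intro j _
      have hj := P (X ^ j)
      simp only [eval_pow, eval_X] at hj
      exact ((BddMeas.const _).mul (hj.mul (P (ψ n)).star)).integrable
  have hψsp : ∀ n, ∀ p : ℂ[X], p.natDegree < n + 1 →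
      ∫ x, e x * p.eval (e x) * conj ((ψs n).eval (e x)) ∂μ = 0 := by
    intro n p hp
    have : ∀ᵐ x ∂μ, e x * p.eval (e x) * conj ((ψs n).eval (e x)) =
        ∑ j ∈ Finset.range (n + 1), p.coeff j * conj (e x ^ (n - j) * conj ((ψ n).eval (e x))) := by
      filter_upwards [hS] with x hx
      rw [hψs n x hx, eval_eq_sum_range' hp, Finset.mul_sum, Finset.sum_mul]
      refine Finset.sum_congr rfl fun j hj => ?_
      have hj := Finset.mem_range.1 hj
      have h1 : e x * conj (e x) = 1 := by
        rw [Complex.mul_conj, Complex.normSq_eq_norm_sq, he1]; simp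
      have h2 : n + 1 = (n - j) + (j + 1) := by omega
      simp only [map_mul, map_pow, Complex.conj_conj]
      rw [h2, pow_add]
      calc _ = p.coeff j * (conj (e x) ^ (n - j) * (ψ n).eval (e x)) *
            (e x * conj (e x)) ^ (j + 1) := by rw [mul_pow]; ring
        _ = _ := by rw [h1]; ring
    rw [integral_congr_ae this, integral_finsetSum]
    · refine Finset.sum_eq_zero fun j hj => ?_
      rw [integral_const_mul, integral_conj, hψorth n (n - j) (by omega)]
      simp
    · intro j _
      have hj := P (X ^ (n - j))
      simp only [eval_pow, eval_X] at hj
      exact ((BddMeas.const _).mul (hj.mul (P (ψ n)).star).star).integrable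
  let D : ℕ → ℝ → ℝ → ℂ := fun n x y =>
    d + ∑ j ∈ Finset.range n, (ψ j).eval (e x) * conj ((ψ j).eval (e y))
  -- as a function of y, conj D is a polynomial
  have hDpoly : ∀ n x, ∃ p : ℂ[X], p.degree < (n + 1 : ℕ) ∧ ∀ y, D n x y = conj (p.eval (e y)) := by
    intro n x
    refine ⟨C (conj d) + ∑ j ∈ Finset.range n, C (conj ((ψ j).eval (e x))) * ψ j, ?_, ?_⟩
    · rw [degree_lt_iff_coeff_zero]
      intro m hm
      simp only [coeff_add, finsetSum_coeff, coeff_C_mul, coeff_C]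
      rw [if_neg (by omega), Finset.sum_eq_zero, add_zero]
      intro j hj
      have hj := Finset.mem_range.1 hj
      rw [coeff_eq_zero_of_natDegree_lt (by have := hψdeg j; omega), mul_zero]
    · intro y
      simp [D, eval_finsetSum]
  have hDB : ∀ n x, BddMeas μ (D n x) := by
    intro n x
    obtain ⟨p, -, hp⟩ := hDpoly n x
    have : D n x = fun y => conj (p.eval (e y)) := funext hp
    rw [this]; exact (P p).star
  have hDint : ∀ n x, ∫ y, D n x y ∂μ = d * μ.real univ := by
    intro n x
    simp only [D]
    rw [integral_add (integrable_const _), integral_finsetSum]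
    · rw [Finset.sum_eq_zero, add_zero, integral_const, Complex.real_smul, mul_comm]
      intro j _
      rw [integral_const_mul]
      have := hψp j 1 (by simp)
      simp only [eval_one, one_mul] at this
      rw [this, mul_zero]
    · intro j _
      exact ((BddMeas.const _).mul (P _).star).integrable
    · exact integrable_finsetSum _ fun j _ => ((BddMeas.const _).mul (P _).star).integrable
  -- Expand `φ_{n+1}(y) = φ_{n+1}(z) + (y - z) q(y)`; the factor `y - z` turns the kernel into the
  -- left side of the Christoffel–Darboux formula, and orthogonality removes all terms but two.
  have hrep : ∀ n, ∀ x ∈ S, d * μ.real univ * (φ (n + 1)).eval (e x) =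
      (ψ n).eval (e x) * ∫ y, (φ (n + 1)).eval (e y) * conj ((ψ n).eval (e y)) ∂μ +
        ∫ y, (φ (n + 1)).eval (e y) * D n x y ∂μ := by
    intro n x hx
    set f := φ (n + 1) with hf
    set z := e x with hz
    set q := f /ₘ (X - C z) with hq
    have hfq : ∀ y, f.eval y = f.eval z + (y - z) * q.eval y := by
      intro y
      have h := congrArg (eval y) (modByMonic_add_div f (X - C z))
      rw [modByMonic_X_sub_C_eq_C_eval] at h
      simpa using h.symm
    have hqd : q.natDegree < n + 1 := by
      rw [hq, natDegree_divByMonic _ (monic_X_sub_C z), natDegree_X_sub_C,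
        natDegree_eq_of_degree_eq_some (hdeg (n + 1))]
      omega
    have h1 : ∀ y, f.eval (e y) * D n x y = f.eval z * D n x y +
        ((ψs n).eval z * (e y * q.eval (e y) * conj ((ψs n).eval (e y))) -
          (ψ n).eval z * (f.eval (e y) * conj ((ψ n).eval (e y)) -
          f.eval z * ((1 : ℂ[X]).eval (e y) * conj ((ψ n).eval (e y))) +
          z * (q.eval (e y) * conj ((ψ n).eval (e y))))) := by
      intro y
      have hy : e y * conj (e y) = 1 := by
        rw [Complex.mul_conj, Complex.normSq_eq_norm_sq, he1]; simp
      have hcd := hCD n x y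
      rw [← hz] at hcd
      have hDe : D n x y = d + ∑ j ∈ Finset.range n, (ψ j).eval z * conj ((ψ j).eval (e y)) := rfl
      rw [← hDe] at hcd
      rw [hfq (e y)]
      simp only [eval_one]
      linear_combination (q.eval (e y) * D n x y * z) * hy - e y * q.eval (e y) * hcd
    have I1 := ((BddMeas.const (f.eval z)).mul (hDB n x)).integrable
    have I2 := ((BddMeas.const ((ψs n).eval z)).mul ((hE.mul (P q)).mul (P (ψs n)).star)).integrable
    have I3 := ((P f).mul (P (ψ n)).star).integrable
    have I4 := ((BddMeas.const (f.eval z)).mul ((P 1).mul (P (ψ n)).star)).integrable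
    have I5 := ((BddMeas.const z).mul ((P q).mul (P (ψ n)).star)).integrable
    have I34 : Integrable (fun y => f.eval (e y) * conj ((ψ n).eval (e y)) -
        f.eval z * ((1 : ℂ[X]).eval (e y) * conj ((ψ n).eval (e y)))) μ := I3.sub I4
    have I6 : Integrable (fun y => (ψ n).eval z * (f.eval (e y) * conj ((ψ n).eval (e y)) -
        f.eval z * ((1 : ℂ[X]).eval (e y) * conj ((ψ n).eval (e y))) +
        z * (q.eval (e y) * conj ((ψ n).eval (e y))))) μ := (I34.add I5).const_mul _
    have I26 : Integrable (fun y =>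
        (ψs n).eval z * (e y * q.eval (e y) * conj ((ψs n).eval (e y))) -
        (ψ n).eval z * (f.eval (e y) * conj ((ψ n).eval (e y)) -
        f.eval z * ((1 : ℂ[X]).eval (e y) * conj ((ψ n).eval (e y))) +
        z * (q.eval (e y) * conj ((ψ n).eval (e y))))) μ := I2.sub I6
    have h2 : ∫ y, f.eval (e y) * D n x y ∂μ = f.eval z * (d * μ.real univ) +
        ((ψs n).eval z * 0 - (ψ n).eval z *
          (∫ y, f.eval (e y) * conj ((ψ n).eval (e y)) ∂μ - f.eval z * 0 + z * 0)) := by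
      simp_rw [h1]
      rw [integral_add I1 I26, integral_sub I2 I6,
        integral_const_mul, integral_const_mul, integral_const_mul, integral_add I34 I5,
        integral_sub I3 I4, integral_const_mul, integral_const_mul, hDint n x, hψsp n q hqd,
        hψp n q hqd, hψp n 1 (by simp)]
    rw [h2]; ring
  have hM := hM0 0
  refine ⟨(M * (M * L) + 2 * M ^ 2 * |lam| * L / k₀) / (‖d‖ * μ.real univ), fun x hx n => ?_⟩
  rw [le_div_iff₀ (mul_pos (norm_pos_iff.2 hd) hmu)]
  have hkx := hk x hx
  have T1 : ‖∫ y, (φ (n + 1)).eval (e y) * conj ((ψ n).eval (e y)) ∂μ‖ ≤ M * L := by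
    calc _ ≤ ∫ y, M * ‖(φ (n + 1)).eval (e y)‖ ∂μ := by
          refine norm_integral_le_of_norm_le ((P _).integrable.norm.const_mul M) ?_
          filter_upwards [hS] with y hy
          rw [norm_mul, RCLike.norm_conj, mul_comm]
          exact mul_le_mul_of_nonneg_right (hψM n y hy) (norm_nonneg _)
      _ ≤ _ := by
          rw [integral_const_mul]; exact mul_le_mul_of_nonneg_left (hL1 _) hM
  -- Orthogonality for `k` lets one replace `k x` by `k x - k y` under the integral.
  have T2 : ‖∫ y, (φ (n + 1)).eval (e y) * D n x y ∂μ‖ ≤ 2 * M ^ 2 * |lam| * L / k₀ := by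
    have h0 : ∫ y, (φ (n + 1)).eval (e y) * D n x y * (k y : ℂ) ∂μ = 0 := by
      obtain ⟨p, hp, hDp⟩ := hDpoly n x
      simp_rw [hDp]
      exact orth_of_degree_lt μ e he he1 _ hkB φ hdeg
        (fun n m h => by rw [horth, if_neg h]) (n + 1) p hp
    have h1 : (k x : ℂ) * ∫ y, (φ (n + 1)).eval (e y) * D n x y ∂μ =
        ∫ y, (φ (n + 1)).eval (e y) * (D n x y * ((k x - k y : ℝ) : ℂ)) ∂μ := by
      rw [← integral_const_mul, ← sub_zero (∫ y, (k x : ℂ) * _ ∂μ), ← h0, ← integral_sub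
        ((BddMeas.const _).mul ((P _).mul (hDB n x))).integrable
        (((P _).mul (hDB n x)).mul hkB).integrable]
      refine integral_congr_ae (.of_forall fun y => ?_)
      simp only
      push_cast; ring
    have h2 : ∀ y ∈ S, ‖D n x y * ((k x - k y : ℝ) : ℂ)‖ ≤ 2 * M ^ 2 * |lam| := by
      intro y hy
      have hs : ∀ x ∈ S, ‖(ψs n).eval (e x)‖ ≤ M := by
        intro x hx
        rw [hψs n x hx, norm_mul, norm_pow, he1, RCLike.norm_conj]
        simpa using hψM n x hx
      have hN : ‖1 - e x * conj (e y)‖ * ‖D n x y‖ ≤ 2 * M ^ 2 := by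
        rw [← norm_mul, ← hCD n x y]
        refine (norm_sub_le _ _).trans ?_
        rw [norm_mul, norm_mul, RCLike.norm_conj, RCLike.norm_conj]
        have a1 := mul_le_mul (hs x hx) (hs y hy) (norm_nonneg _) hM
        have a2 := mul_le_mul (hψM n x hx) (hψM n y hy) (norm_nonneg _) hM
        linarith
      rw [norm_mul, Complex.norm_real, Real.norm_eq_abs]
      calc _ ≤ ‖D n x y‖ * (|lam| * ‖1 - e x * conj (e y)‖) := by
            refine mul_le_mul_of_nonneg_left ((hlip x hx y hy).trans ?_) (norm_nonneg _)
            exact mul_le_mul_of_nonneg_right (le_abs_self _) (norm_nonneg _)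
        _ = |lam| * (‖1 - e x * conj (e y)‖ * ‖D n x y‖) := by ring
        _ ≤ |lam| * (2 * M ^ 2) := mul_le_mul_of_nonneg_left hN (abs_nonneg _)
        _ = _ := by ring
    have h3 : k x * ‖∫ y, (φ (n + 1)).eval (e y) * D n x y ∂μ‖ ≤ 2 * M ^ 2 * |lam| * L := by
      have := congrArg norm h1
      rw [norm_mul, Complex.norm_real, Real.norm_of_nonneg (hk₀.le.trans hkx)] at this
      rw [this]
      calc _ ≤ ∫ y, (2 * M ^ 2 * |lam|) * ‖(φ (n + 1)).eval (e y)‖ ∂μ := by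
            refine norm_integral_le_of_norm_le ((P _).integrable.norm.const_mul _) ?_
            filter_upwards [hS] with y hy
            rw [norm_mul, mul_comm]
            exact mul_le_mul_of_nonneg_right (h2 y hy) (norm_nonneg _)
        _ ≤ _ := by
            rw [integral_const_mul]; exact mul_le_mul_of_nonneg_left (hL1 _) (by positivity)
    rw [le_div_iff₀ hk₀, mul_comm]
    exact (mul_le_mul_of_nonneg_right hkx (norm_nonneg _)).trans h3
  have hr := congrArg norm (hrep n x hx)
  rw [norm_mul, norm_mul, Complex.norm_real, Real.norm_of_nonneg hmu.le] at hr
  rw [mul_comm, hr]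
  refine (norm_add_le _ _).trans (add_le_add ?_ T2)
  rw [norm_mul]
  exact mul_le_mul (hψM n x hx) T1 (norm_nonneg _) hM

/-! ### Change of variables -/

theorem arcParam_half {α : ℝ} (hα : α ∈ Ioo 0 Real.pi) :
    ArcParam (Real.cos (α / 2)) (Real.sin (α / 2)) where
  c_pos := Real.cos_pos_of_mem_Ioo ⟨by linarith [hα.1, Real.pi_pos], by linarith [hα.2]⟩
  σ_pos := Real.sin_pos_of_pos_of_lt_pi (by linarith [hα.1]) (by linarith [hα.1, hα.2])
  sq := Real.cos_sq_add_sin_sq _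

theorem arc_image {α : ℝ} (hα : α ∈ Ioo 0 Real.pi) :
    (fun t => 2 * arcU (Real.cos (α / 2)) t) '' Ioo 0 Real.pi = Ioo α (2 * Real.pi - α) := by
  have h := arcParam_half hα
  obtain ⟨h0, h1⟩ := hα
  have hp := Real.pi_pos
  have hc := h.c_pos
  have anti := Real.strictAntiOn_cos
  ext θ
  constructor
  · rintro ⟨t, ht, rfl⟩
    have hu : arcU (Real.cos (α / 2)) t ∈ Icc 0 Real.pi :=
      ⟨Real.arccos_nonneg _, Real.arccos_le_pi _⟩
    have e1 : Real.cos t < 1 := by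
      have := anti (left_mem_Icc.2 hp.le) (Ioo_subset_Icc_self ht) ht.1
      rwa [Real.cos_zero] at this
    have e2 : -1 < Real.cos t := by
      have := anti (Ioo_subset_Icc_self ht) (right_mem_Icc.2 hp.le) ht.2
      rwa [Real.cos_pi] at this
    have e3 := h.cos_arcU t
    have a1 : α / 2 < arcU (Real.cos (α / 2)) t := by
      refine (anti.lt_iff_gt hu ⟨by linarith, by linarith⟩).1 ?_
      rw [e3]; nlinarith
    have a2 : arcU (Real.cos (α / 2)) t < Real.pi - α / 2 := by
      refine (anti.lt_iff_gt ⟨by linarith, by linarith⟩ hu).1 ?_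
      rw [e3, Real.cos_pi_sub]; nlinarith
    constructor <;> simp only <;> linarith
  · rintro ⟨b1, b2⟩
    have a1 : Real.cos (θ / 2) < Real.cos (α / 2) :=
      anti ⟨by linarith, by linarith⟩ ⟨by linarith, by linarith⟩ (by linarith)
    have a2 : -Real.cos (α / 2) < Real.cos (θ / 2) := by
      rw [← Real.cos_pi_sub]
      exact anti ⟨by linarith, by linarith⟩ ⟨by linarith, by linarith⟩ (by linarith)
    have d1 : Real.cos (θ / 2) / Real.cos (α / 2) < 1 := (div_lt_one hc).2 a1
    have d2 : -1 < Real.cos (θ / 2) / Real.cos (α / 2) := by rw [lt_div_iff₀ hc]; linarith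
    refine ⟨Real.arccos (Real.cos (θ / 2) / Real.cos (α / 2)),
      ⟨Real.arccos_pos.2 d1, ?_⟩, ?_⟩
    · exact lt_of_le_of_ne (Real.arccos_le_pi _) fun h => by
        rw [Real.arccos_eq_pi] at h; linarith
    · simp only [arcU]
      rw [Real.cos_arccos d2.le d1.le, mul_div_cancel₀ _ hc.ne',
        Real.arccos_cos (by linarith) (by linarith)]
      ring

theorem ArcParam.hasDerivAt_arcU {c σ : ℝ} (h : ArcParam c σ) (t : ℝ) :
    HasDerivAt (arcU c) (c * Real.sin t * invS c t) t := by
  have hlt := _root_.abs_lt.1 (h.abs_lt t)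
  have := (Real.hasDerivAt_arccos hlt.1.ne' hlt.2.ne).comp t
    ((Real.hasDerivAt_cos t).const_mul c)
  refine this.congr_deriv ?_
  rw [invS, h.sin_arcU, mul_pow]
  simp only [one_div]
  ring

theorem ArcParam.injOn_arcU {c σ : ℝ} (h : ArcParam c σ) :
    InjOn (fun t => 2 * arcU c t) (Ioo 0 Real.pi) := by
  intro x hx y hy hxy
  have h1 : arcU c x = arcU c y := by simpa using hxy
  have h2 := congrArg Real.cos h1
  rw [h.cos_arcU, h.cos_arcU] at h2
  exact Real.injOn_cos (Ioo_subset_Icc_self hx) (Ioo_subset_Icc_self hy)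
    (mul_left_cancel₀ h.c_pos.ne' h2)

/-- Jacobian identity: `w_α dθ = σ dt / sin² u`. -/
theorem wAC_arcU {α : ℝ} (hα : α ∈ Ioo 0 Real.pi) {t : ℝ} (ht : t ∈ Ioo 0 Real.pi) :
    |2 * (Real.cos (α / 2) * Real.sin t * invS (Real.cos (α / 2)) t)| *
      wAC α (2 * arcU (Real.cos (α / 2)) t) =
    Real.sin (α / 2) * invS (Real.cos (α / 2)) t ^ 2 := by
  have h := arcParam_half hα
  have hc := h.c_pos
  have hs : 0 < Real.sin t := Real.sin_pos_of_pos_of_lt_pi ht.1 ht.2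
  have hS := h.sin_arcU_pos t
  have hr : Real.sqrt (Real.cos (α / 2) ^ 2 - (Real.cos (α / 2) * Real.cos t) ^ 2) =
      Real.cos (α / 2) * Real.sin t := by
    rw [show Real.cos (α / 2) ^ 2 - (Real.cos (α / 2) * Real.cos t) ^ 2 =
      (Real.cos (α / 2) * Real.sin t) ^ 2 by rw [mul_pow, mul_pow, Real.sin_sq]; ring]
    exact Real.sqrt_sq (by positivity)
  rw [wAC, mul_div_cancel_left₀ _ (two_ne_zero), h.cos_arcU, hr, invS,
    abs_of_pos (by positivity)]
  field_simp

theorem integrableOn_wAC {α : ℝ} (hα : α ∈ Ioo 0 Real.pi) :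
    IntegrableOn (wAC α) (Ioo α (2 * Real.pi - α)) := by
  have h := arcParam_half hα
  rw [← arc_image hα, integrableOn_image_iff_integrableOn_abs_deriv_smul measurableSet_Ioo
    (fun t _ => ((h.hasDerivAt_arcU t).const_mul 2).hasDerivWithinAt) h.injOn_arcU]
  have hcont : Continuous fun t => Real.sin (α / 2) * invS (Real.cos (α / 2)) t ^ 2 :=
    continuous_const.mul (h.continuous_invS.pow 2)
  refine ((hcont.integrableOn_Icc (a := 0) (b := Real.pi)).mono_set
    Ioo_subset_Icc_self).congr_fun (fun t ht => ?_) measurableSet_Ioo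
  exact (wAC_arcU hα ht).symm

theorem integral_wAC {α : ℝ} (hα : α ∈ Ioo 0 Real.pi) (f : ℝ → ℂ) :
    ∫ θ in Ioo α (2 * Real.pi - α), wAC α θ • f θ =
      Real.sin (α / 2) • ∫ t in (0)..Real.pi, f (2 * arcU (Real.cos (α / 2)) t) *
        ((invS (Real.cos (α / 2)) t ^ 2 : ℝ) : ℂ) := by
  have h := arcParam_half hα
  rw [← arc_image hα, integral_image_eq_integral_abs_deriv_smul measurableSet_Ioo
    (fun t _ => ((h.hasDerivAt_arcU t).const_mul 2).hasDerivWithinAt) h.injOn_arcU,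
    intervalIntegral.integral_of_le Real.pi_pos.le, integral_Ioc_eq_integral_Ioo,
    ← integral_smul]
  refine setIntegral_congr_fun measurableSet_Ioo fun t ht => ?_
  rw [smul_smul, wAC_arcU hα ht, Complex.real_smul, Complex.real_smul, Complex.ofReal_mul]
  ring

theorem wAC_pos {α : ℝ} (hα : α ∈ Ioo 0 Real.pi) {θ : ℝ} (hθ : θ ∈ Ioo α (2 * Real.pi - α)) :
    0 < wAC α θ := by
  have h := arcParam_half hα
  rw [← arc_image hα] at hθ
  obtain ⟨t, ht, rfl⟩ := hθ
  have e := wAC_arcU hα ht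
  have hv : 0 < invS (Real.cos (α / 2)) t := inv_pos.2 (h.sin_arcU_pos t)
  have : 0 < Real.sin (α / 2) * invS (Real.cos (α / 2)) t ^ 2 := mul_pos h.σ_pos (pow_pos hv 2)
  rw [← e] at this
  exact pos_of_mul_pos_right this (abs_nonneg _)

/-- Arc length is controlled by chord length: the angular distance stays below `2π - 2α`, so the
chord does not close up. -/
theorem chord_le {α : ℝ} (hα : α ∈ Ioo 0 Real.pi) {x y : ℝ}
    (hx : x ∈ Ioo α (2 * Real.pi - α)) (hy : y ∈ Ioo α (2 * Real.pi - α)) :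
    |x - y| ≤ Real.pi / (2 * Real.sin (α / 2)) *
      ‖1 - Complex.exp (x * Complex.I) * conj (Complex.exp (y * Complex.I))‖ := by
  have h := arcParam_half hα
  have hσ := h.σ_pos
  have hp := Real.pi_pos
  have e : Complex.exp (x * Complex.I) * conj (Complex.exp (y * Complex.I)) =
      Complex.exp (Complex.I * ((x - y : ℝ) : ℂ)) := by
    rw [← Complex.exp_conj, ← Complex.exp_add]
    congr 1
    simp only [map_mul, Complex.conj_ofReal, Complex.conj_I]
    push_cast; ring
  have hd1 : |x - y| < 2 * Real.pi - 2 * α := by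
    rw [_root_.abs_lt]; constructor <;> linarith [hx.1, hx.2, hy.1, hy.2]
  have hd0 := abs_nonneg (x - y)
  have e2 : |Real.sin ((x - y) / 2)| = Real.sin (|x - y| / 2) := by
    rcases abs_cases (x - y) with ⟨a, b⟩ | ⟨a, b⟩
    · rw [a] at hd1 ⊢
      exact abs_of_nonneg (Real.sin_nonneg_of_nonneg_of_le_pi (by linarith) (by linarith [hα.1]))
    · rw [a] at hd1 ⊢
      rw [← abs_neg, ← Real.sin_neg, ← neg_div]
      exact abs_of_nonneg (Real.sin_nonneg_of_nonneg_of_le_pi (by linarith) (by linarith [hα.1]))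
  rw [norm_sub_rev, e, Complex.norm_exp_I_mul_ofReal_sub_one, Real.norm_eq_abs, abs_mul, abs_two, e2]
  generalize |x - y| = D at *
  have hs1 : 2 / Real.pi * (D / 4) ≤ Real.sin (D / 4) :=
    Real.mul_le_sin (by linarith) (by linarith [hα.1])
  have hc1 : Real.sin (α / 2) ≤ Real.cos (D / 4) := by
    rw [← Real.cos_pi_div_two_sub]
    exact Real.strictAntiOn_cos.antitoneOn ⟨by linarith, by linarith [hα.1]⟩
      ⟨by linarith [hα.2], by linarith [hα.1]⟩ (by linarith)
  have e3 : Real.sin (D / 2) = 2 * Real.sin (D / 4) * Real.cos (D / 4) := by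
    rw [← Real.sin_two_mul]; congr 1; ring
  have h4 : 2 / Real.pi * (D / 4) * Real.sin (α / 2) ≤ Real.sin (D / 4) * Real.cos (D / 4) :=
    mul_le_mul hs1 hc1 hσ.le (le_trans (by positivity) hs1)
  rw [e3]
  calc D = Real.pi / (2 * Real.sin (α / 2)) * (2 * (2 * (2 / Real.pi * (D / 4) * Real.sin (α / 2)))) := by
        field_simp; ring
    _ ≤ Real.pi / (2 * Real.sin (α / 2)) * (2 * (2 * (Real.sin (D / 4) * Real.cos (D / 4)))) := by
        gcongr
    _ = _ := by ring

end Comparison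

/-! ### Boundedness for the weight `k · w_α` -/

theorem stmt17 (α : ℝ) (hα : α ∈ Set.Ioo 0 Real.pi)
    (k : ℝ → ℝ) (k₀ : ℝ) (hk₀ : 0 < k₀)
    (hk : ∀ θ ∈ Set.Ioo α (2 * Real.pi - α), k₀ ≤ k θ)
    (lam : ℝ) (hlam : 0 < lam)
    (hlip : ∀ θ₁ ∈ Set.Ioo α (2 * Real.pi - α), ∀ θ₂ ∈ Set.Ioo α (2 * Real.pi - α),
      |k θ₁ - k θ₂| ≤ lam * |θ₁ - θ₂|)
    (φ : ℕ → Polynomial ℂ)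
    (hdeg : ∀ n : ℕ, (φ n).degree = n)
    (hlead : ∀ n : ℕ, 0 < (φ n).leadingCoeff.re ∧ (φ n).leadingCoeff.im = 0)
    (horth : ∀ n m : ℕ,
      ((1 / (2 * Real.pi) : ℝ) : ℂ) *
        ∫ θ in Set.Ioo α (2 * Real.pi - α),
          (φ n).eval (Complex.exp (θ * Complex.I)) *
            (starRingEnd ℂ) ((φ m).eval (Complex.exp (θ * Complex.I))) *
              ((k θ * wAC α θ : ℝ) : ℂ)
        = if n = m then 1 else 0) :
    ∃ C : ℝ, ∀ θ ∈ Set.Ioo α (2 * Real.pi - α), ∀ n : ℕ,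
      ‖(φ n).eval (Complex.exp (θ * Complex.I))‖ ≤ C := by
  have h := arcParam_half hα
  have hσ := h.σ_pos
  have hp := Real.pi_pos
  set c := Real.cos (α / 2) with hc
  set σ := Real.sin (α / 2) with hσdef
  set S := Ioo α (2 * Real.pi - α) with hS
  set e : ℝ → ℂ := fun x => Complex.exp (x * Complex.I) with he
  set ν : Measure ℝ := volume.restrict S with hν
  set μ : Measure ℝ := ν.withDensity fun θ => ENNReal.ofReal (wAC α θ) with hμdef
  have hwm : Measurable (wAC α) := by unfold wAC; fun_prop
  have hfin : IsFiniteMeasure μ := isFiniteMeasure_withDensity_ofReal (integrableOn_wAC hα).2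
  have hac : μ ≪ ν := withDensity_absolutelyContinuous _ _
  have hνS : ∀ᵐ x ∂ν, x ∈ S := ae_restrict_mem measurableSet_Ioo
  have hμS : ∀ᵐ x ∂μ, x ∈ S := hac.ae_le hνS
  have hμ0 : μ ≠ 0 := by
    intro h0
    rw [hμdef, withDensity_eq_zero_iff hwm.ennreal_ofReal.aemeasurable] at h0
    have hF : ∀ᵐ x ∂ν, False := by
      filter_upwards [h0, hνS] with x h1 h2
      have := wAC_pos hα h2
      simp only [Pi.zero_apply, ENNReal.ofReal_eq_zero] at h1
      linarith
    rw [ae_iff, hν] at hF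
    simp only [not_false_eq_true, Set.ofPred_true, Measure.restrict_apply_univ, hS, Real.volume_Ioo,
      ENNReal.ofReal_eq_zero] at hF
    linarith [hα.2]
  have hint : ∀ f : ℝ → ℂ, ∫ x, f x ∂μ = ∫ θ in S, wAC α θ • f θ := by
    intro f
    rw [hμdef, integral_withDensity_eq_integral_toReal_smul hwm.ennreal_ofReal
      (ae_of_all _ fun x => ENNReal.ofReal_lt_top)]
    refine setIntegral_congr_fun measurableSet_Ioo fun θ hθ => ?_
    rw [ENNReal.toReal_ofReal (wAC_pos hα hθ).le]
  have hpiS : Real.pi ∈ S := ⟨hα.2, by linarith [hα.2]⟩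
  have hkc : ContinuousOn k S := by
    refine (LipschitzOnWith.of_dist_le_mul (K := ⟨lam, hlam.le⟩) fun x hx y hy => ?_).continuousOn
    exact hlip x hx y hy
  have hkm : AEStronglyMeasurable k μ :=
    (hkc.aestronglyMeasurable measurableSet_Ioo).mono_ac hac
  have hk₁ : ∀ x ∈ S, k x ≤ k Real.pi + lam * Real.pi := by
    intro x hx
    have h1 := (le_abs_self _).trans (hlip x hx _ hpiS)
    have h2 : |x - Real.pi| ≤ Real.pi :=
      _root_.abs_le.2 ⟨by linarith [hx.1, hα.1], by linarith [hx.2, hα.1]⟩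
    have := mul_le_mul_of_nonneg_left h2 hlam.le
    linarith
  have hmem : ∀ x ∈ S, ∃ t, e x = arcW c t ^ 2 := by
    intro x hx
    rw [hS, ← arc_image hα] at hx
    obtain ⟨t, -, rfl⟩ := hx
    exact ⟨t, by simp only [he, arcW]; rw [← Complex.exp_nat_mul]; congr 1; push_cast; ring⟩
  have hd : (4 * σ * (1 - σ) / c ^ 2 : ℂ) ≠ 0 := by
    have h1 : (0 : ℝ) < 4 * σ * (1 - σ) / c ^ 2 := by
      have := h.σ_lt
      have := h.c_pos
      have : 0 < 1 - σ := by linarith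
      positivity
    exact_mod_cast h1.ne'
  obtain ⟨C, hC⟩ := korous_bound μ hμ0 S hμS e (by fun_prop)
    (fun x => Complex.norm_exp_ofReal_mul_I x) k hkm k₀ (k Real.pi + lam * Real.pi)
    (lam * (Real.pi / (2 * σ))) (2 + 2 * (1 - σ) / c) (2 * Real.pi) hk₀ hk hk₁
    (fun x hx y hy => (hlip x hx y hy).trans (by
      rw [mul_assoc]; exact mul_le_mul_of_nonneg_left (chord_le hα hx hy) hlam.le))
    (fun n => (psiPair c σ n).1) (fun n => (psiPair c σ n).2)
    (fun n => (psiPair_natDegree c σ n).1)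
    (fun n x hx => by
      obtain ⟨t, ht⟩ := hmem x hx
      rw [ht]; exact psiPair_norm_le h n t)
    (fun n x hx => by
      obtain ⟨t, ht⟩ := hmem x hx
      rw [ht]; exact psiPair_star h n t)
    (fun n j hj => by
      have he2 : ∀ t, e (2 * arcU c t) = arcW c t ^ 2 := by
        intro t
        simp only [he, arcW]; rw [← Complex.exp_nat_mul]; congr 1; push_cast; ring
      rw [hint, integral_wAC hα]
      simp only [← hc, he2]
      rw [psi_orth_t h n j hj, smul_zero])
    (4 * σ * (1 - σ) / c ^ 2) hd
    (fun n x y => by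
      simp only [(psiPair_conj c σ _ _).1, (psiPair_conj c σ _ _).2]
      exact psiPair_CD h n _ _)
    φ hdeg
    (fun n m => by
      have h1 := horth n m
      have h2 : ∫ x, (φ n).eval (e x) * (starRingEnd ℂ) ((φ m).eval (e x)) * (k x : ℂ) ∂μ =
          ∫ θ in S, (φ n).eval (e θ) * (starRingEnd ℂ) ((φ m).eval (e θ)) *
            ((k θ * wAC α θ : ℝ) : ℂ) := by
        rw [hint]
        refine integral_congr_ae (ae_of_all _ fun θ => ?_)
        simp only [Complex.real_smul, Complex.ofReal_mul]
        ring
      rw [h2]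
      have h3 : ((1 / (2 * Real.pi) : ℝ) : ℂ) * ((2 * Real.pi : ℝ) : ℂ) = 1 := by
        rw [← Complex.ofReal_mul]; norm_num; field_simp
      rw [← mul_one (∫ θ in S, _), ← h3, mul_comm, mul_assoc, mul_comm ((2 * Real.pi : ℝ) : ℂ),
        ← mul_assoc, h1]
      split_ifs <;> simp)
  obtain ⟨a, ha⟩ : ∃ a, φ 0 = Polynomial.C a :=
    ⟨_, Polynomial.eq_C_of_degree_eq_zero (by simpa using hdeg 0)⟩
  refine ⟨max C ‖a‖, fun θ hθ n => ?_⟩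
  rcases n with _ | n
  · rw [ha, Polynomial.eval_C]; exact le_max_right _ _
  · exact (hC θ hθ n).trans (le_max_left _ _)
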